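/- Almost surely, as the integer n → ∞, e^{−α n} ∫_0^n X_s ds converges to A_∞/α + Z_∞. -/

import Mathlib

open MeasureTheory ProbabilityTheory Filter

/-!
Write `F_T = ∫₀ᵀ e^{-αs} f s ds`. Integration by parts gives
`α ∫₀ᵀ e^{αs} F_s ds = e^{αT} F_T - ∫₀ᵀ f`, and `e^{-αT} ∫₀ᵀ f → 0` by dominated convergence as soon
as `e^{-αs} f s` is integrable on `(0, ∞)`. For `f = B` the term `-∫₀ᵀ B` cancels against the last
summand of `X`, so that the random part of `e^{-αT} ∫₀ᵀ X` is exactly `Z_T → Z_∞`; for `f = L` one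
is left with `A_T / α`, whose limit `∫₀^∞ e^{-αs} L s ds / α` is a geometric series by periodicity.
The paths of `e^{-αs} B_s` are almost surely integrable by Fubini, since `E|B_s| ≤ 1 + s^{2H}`.
-/

section ExponentialWeight

variable {E : Type*} [NormedAddCommGroup E] [NormedSpace ℝ E] {α τ a b T : ℝ}

lemma exp_neg_mul_mul_exp_mul (α T : ℝ) : Real.exp (-α * T) * Real.exp (α * T) = 1 := by
  simp [← Real.exp_add]

lemma one_sub_exp_neg_mul_pos (hα : 0 < α) (hτ : 0 < τ) : 0 < 1 - Real.exp (-α * τ) :=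
  sub_pos.2 (Real.exp_lt_one_iff.2 (by nlinarith))

lemma intervalIntegrable_exp_neg_smul {f : ℝ → E} (hf : IntervalIntegrable f volume a b) :
    IntervalIntegrable (fun s => Real.exp (-α * s) • f s) volume a b :=
  hf.continuousOn_smul (by fun_prop)

lemma intervalIntegrable_of_integrableOn_exp_neg_smul {f : ℝ → E}
    (hf : IntegrableOn (fun s => Real.exp (-α * s) • f s) (Set.Ioi 0)) (hT : 0 ≤ T) :
    IntervalIntegrable f volume 0 T := by
  have hweighted : IntervalIntegrable (fun s => Real.exp (-α * s) • f s) volume 0 T :=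
    (intervalIntegrable_iff_integrableOn_Ioc_of_le hT).2 (hf.mono_set Set.Ioc_subset_Ioi_self)
  refine (hweighted.continuousOn_smul (f := fun s => Real.exp (α * s)) (by fun_prop)).congr
    fun s _ => ?_
  simp [smul_smul, ← Real.exp_add]

lemma exp_neg_smul_intervalIntegral_eq_setIntegral_indicator (f : ℝ → E) (hT : 0 ≤ T) :
    Real.exp (-α * T) • ∫ s in (0 : ℝ)..T, f s =
      ∫ s in Set.Ioi 0, (Set.Iic T).indicator
        (fun s => Real.exp (-α * (T - s)) • (Real.exp (-α * s) • f s)) s := by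
  rw [setIntegral_indicator measurableSet_Iic, Set.Ioi_inter_Iic,
    ← intervalIntegral.integral_of_le hT, ← intervalIntegral.integral_smul]
  refine intervalIntegral.integral_congr fun s _ => ?_
  simp only [smul_smul, ← Real.exp_add]
  ring_nf

lemma tendsto_exp_neg_smul_intervalIntegral_zero {f : ℝ → E} (hα : 0 < α)
    (hf : IntegrableOn (fun s => Real.exp (-α * s) • f s) (Set.Ioi 0)) :
    Tendsto (fun T => Real.exp (-α * T) • ∫ s in (0 : ℝ)..T, f s) atTop (nhds 0) := by
  have hlim : Tendsto (fun T => ∫ s in Set.Ioi 0, (Set.Iic T).indicator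
      (fun s => Real.exp (-α * (T - s)) • (Real.exp (-α * s) • f s)) s) atTop
      (nhds (∫ _ in Set.Ioi (0 : ℝ), (0 : E))) := by
    refine tendsto_integral_filter_of_dominated_convergence _ (.of_forall fun T => ?_)
      (.of_forall fun T => .of_forall fun s => ?_) hf.norm (.of_forall fun s => ?_)
    · have hcont : Continuous fun s => Real.exp (-α * (T - s)) := by fun_prop
      exact (hcont.aestronglyMeasurable.smul hf.aestronglyMeasurable).indicator measurableSet_Iic
    · rw [Set.indicator_apply]
      split_ifs with hs
      · have hle : Real.exp (-α * (T - s)) ≤ 1 :=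
          Real.exp_le_one_iff.2 (by nlinarith [Set.mem_Iic.1 hs])
        rw [norm_smul, Real.norm_of_nonneg (Real.exp_pos _).le]
        exact mul_le_of_le_one_left (norm_nonneg _) hle
      · simp
    · have hexp : Tendsto (fun T => Real.exp (-α * (T - s))) atTop (nhds 0) :=
        Real.tendsto_exp_atBot.comp
          ((tendsto_atTop_add_const_right _ (-s) tendsto_id).const_mul_atTop_of_neg (by linarith))
      have hsmul := hexp.smul_const (Real.exp (-α * s) • f s)
      rw [zero_smul] at hsmul
      refine hsmul.congr' ?_
      filter_upwards [eventually_ge_atTop s] with T hT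
      rw [Set.indicator_of_mem (Set.mem_Iic.2 hT)]
  rw [integral_zero] at hlim
  refine hlim.congr' ?_
  filter_upwards [eventually_ge_atTop 0] with T hT
  exact (exp_neg_smul_intervalIntegral_eq_setIntegral_indicator f hT).symm

lemma integral_exp_neg_smul_add_period {f : ℝ → E} (hper : Function.Periodic f τ)
    (hfi : ∀ a b, IntervalIntegrable f volume a b) (t : ℝ) :
    ∫ s in (0 : ℝ)..(t + τ), Real.exp (-α * s) • f s =
      (∫ s in (0 : ℝ)..τ, Real.exp (-α * s) • f s) +
        Real.exp (-α * τ) • ∫ s in (0 : ℝ)..t, Real.exp (-α * s) • f s := by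
  rw [← intervalIntegral.integral_add_adjacent_intervals
      (intervalIntegrable_exp_neg_smul (hfi 0 τ))
      (intervalIntegrable_exp_neg_smul (hfi τ (t + τ))),
    ← intervalIntegral.integral_smul]
  congr 1
  calc ∫ s in τ..(t + τ), Real.exp (-α * s) • f s
      = ∫ s in (0 : ℝ)..t, Real.exp (-α * (s + τ)) • f (s + τ) := by
        rw [intervalIntegral.integral_comp_add_right (fun s => Real.exp (-α * s) • f s), zero_add]
    _ = ∫ s in (0 : ℝ)..t, Real.exp (-α * τ) • Real.exp (-α * s) • f s := by
        refine intervalIntegral.integral_congr fun s _ => ?_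
        simp only [hper s, smul_smul, ← Real.exp_add]
        ring_nf

lemma integral_exp_neg_mul_natCast_mul_period_le {f : ℝ → ℝ} (hα : 0 < α) (hτ : 0 < τ)
    (hf : ∀ s, 0 ≤ f s) (hper : Function.Periodic f τ)
    (hfi : ∀ a b, IntervalIntegrable f volume a b) (n : ℕ) :
    ∫ s in (0 : ℝ)..(n * τ), Real.exp (-α * s) * f s ≤
      (∫ s in (0 : ℝ)..τ, Real.exp (-α * s) * f s) / (1 - Real.exp (-α * τ)) := by
  set I := ∫ s in (0 : ℝ)..τ, Real.exp (-α * s) * f s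
  have hI : 0 ≤ I := intervalIntegral.integral_nonneg hτ.le fun s _ =>
    mul_nonneg (Real.exp_pos _).le (hf s)
  have hq := one_sub_exp_neg_mul_pos hα hτ
  induction n with
  | zero => simpa using div_nonneg hI hq.le
  | succ n ih =>
    have hrec := integral_exp_neg_smul_add_period (α := α) hper hfi (n * τ)
    simp only [smul_eq_mul] at hrec
    calc ∫ s in (0 : ℝ)..((n + 1 : ℕ) * τ), Real.exp (-α * s) * f s
        = I + Real.exp (-α * τ) * ∫ s in (0 : ℝ)..(n * τ), Real.exp (-α * s) * f s := by
          rw [← hrec]; push_cast; ring_nf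
      _ ≤ I + Real.exp (-α * τ) * (I / (1 - Real.exp (-α * τ))) := by gcongr
      _ = I / (1 - Real.exp (-α * τ)) := by field [hq.ne']

lemma integrableOn_exp_neg_smul_of_periodic {f : ℝ → E} (hα : 0 < α) (hτ : 0 < τ)
    (hper : Function.Periodic f τ) (hfi : IntervalIntegrable f volume 0 τ) :
    IntegrableOn (fun s => Real.exp (-α * s) • f s) (Set.Ioi 0) := by
  have hfi' := hper.intervalIntegrable₀ hτ.ne' hfi
  refine integrableOn_Ioi_of_intervalIntegral_norm_bounded
    ((∫ s in (0 : ℝ)..τ, Real.exp (-α * s) * ‖f s‖) / (1 - Real.exp (-α * τ))) 0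
    (fun n : ℕ => (intervalIntegrable_exp_neg_smul (hfi' 0 (n * τ))).1)
    (tendsto_natCast_atTop_atTop.atTop_mul_const hτ) (.of_forall fun n => ?_)
  simpa only [norm_smul, Real.norm_of_nonneg (Real.exp_pos _).le] using
    integral_exp_neg_mul_natCast_mul_period_le hα hτ (fun s => norm_nonneg (f s))
      (fun s => congrArg norm (hper s)) (fun a b => (hfi' a b).norm) n

lemma integral_Ioi_exp_neg_smul_of_periodic {f : ℝ → E} (hα : 0 < α) (hτ : 0 < τ)
    (hper : Function.Periodic f τ) (hfi : IntervalIntegrable f volume 0 τ) :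
    ∫ s in Set.Ioi 0, Real.exp (-α * s) • f s =
      (1 - Real.exp (-α * τ))⁻¹ • ∫ s in (0 : ℝ)..τ, Real.exp (-α * s) • f s := by
  have hlim := intervalIntegral_tendsto_integral_Ioi 0
    (integrableOn_exp_neg_smul_of_periodic hα hτ hper hfi) tendsto_id
  have hfix : ∫ s in Set.Ioi 0, Real.exp (-α * s) • f s =
      (∫ s in (0 : ℝ)..τ, Real.exp (-α * s) • f s) +
        Real.exp (-α * τ) • ∫ s in Set.Ioi 0, Real.exp (-α * s) • f s := by
    refine tendsto_nhds_unique (hlim.comp (tendsto_atTop_add_const_right _ τ tendsto_id)) ?_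
    refine ((hlim.const_smul (Real.exp (-α * τ))).const_add _).congr fun t => ?_
    exact (integral_exp_neg_smul_add_period hper (hper.intervalIntegrable₀ hτ.ne' hfi) t).symm
  rw [eq_inv_smul_iff₀ (one_sub_exp_neg_mul_pos hα hτ).ne', sub_smul, one_smul, sub_eq_iff_eq_add]
  exact hfix

end ExponentialWeight

section LangevinPath

variable {α a b T : ℝ} {f g : ℝ → ℝ}

lemma integral_deriv_mul_primitive (hg : AbsolutelyContinuousOnInterval g a b)
    (hf : IntervalIntegrable f volume a b) :
    ∫ s in a..b, deriv g s * ∫ u in a..s, f u =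
      g b * (∫ u in a..b, f u) - ∫ s in a..b, g s * f s := by
  have hparts := hg.integral_mul_deriv_eq_deriv_mul
    (hf.absolutelyContinuousOnInterval_intervalIntegral Set.left_mem_uIcc)
  have hderiv : ∫ s in a..b, g s * deriv (fun x => ∫ u in a..x, f u) s =
      ∫ s in a..b, g s * f s := by
    refine intervalIntegral.integral_congr_ae ?_
    filter_upwards [hf.ae_hasDerivAt_integral] with s hs hmem
    rw [(hs (Set.uIoc_subset_uIcc hmem) a Set.left_mem_uIcc).deriv]
  rw [hderiv, intervalIntegral.integral_same] at hparts
  linarith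

lemma mul_integral_exp_mul_primitive (hf : IntervalIntegrable f volume a b) :
    α * ∫ s in a..b, Real.exp (α * s) * ∫ u in a..s, Real.exp (-α * u) * f u =
      Real.exp (α * b) * (∫ u in a..b, Real.exp (-α * u) * f u) - ∫ u in a..b, f u := by
  have hexp : ContDiff ℝ 1 fun s => Real.exp (α * s) := by fun_prop
  have hparts := integral_deriv_mul_primitive (hexp.contDiffOn.absolutelyContinuousOnInterval)
    (intervalIntegrable_exp_neg_smul (α := α) hf)
  have hderiv (s : ℝ) : deriv (fun s => Real.exp (α * s)) s = α * Real.exp (α * s) := by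
    simpa [mul_comm] using ((hasDerivAt_id s).const_mul α).exp.deriv
  have hcancel (s : ℝ) : Real.exp (α * s) * (Real.exp (-α * s) * f s) = f s := by
    simp [← mul_assoc, ← Real.exp_add]
  simpa only [smul_eq_mul, hderiv, hcancel, mul_assoc, intervalIntegral.integral_const_mul]
    using hparts

lemma exp_neg_mul_integral_exp_mul_primitive (hα : α ≠ 0)
    (hf : IntervalIntegrable f volume 0 T) :
    Real.exp (-α * T) * ∫ s in (0 : ℝ)..T,
        Real.exp (α * s) * ∫ u in (0 : ℝ)..s, Real.exp (-α * u) * f u =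
      ((∫ u in (0 : ℝ)..T, Real.exp (-α * u) * f u) -
        Real.exp (-α * T) * ∫ u in (0 : ℝ)..T, f u) / α := by
  rw [eq_div_iff hα]
  linear_combination Real.exp (-α * T) * mul_integral_exp_mul_primitive (α := α) hf +
    (∫ u in (0 : ℝ)..T, Real.exp (-α * u) * f u) * exp_neg_mul_mul_exp_mul α T

lemma intervalIntegrable_exp_mul_primitive (hf : IntervalIntegrable f volume a b) :
    IntervalIntegrable
      (fun s => Real.exp (α * s) * ∫ u in a..s, Real.exp (-α * u) * f u) volume a b := by
  have hprim := intervalIntegral.continuousOn_primitive_interval'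
    (intervalIntegrable_exp_neg_smul (α := α) hf) Set.left_mem_uIcc
  exact ContinuousOn.intervalIntegrable (by fun_prop)

lemma tendsto_exp_neg_mul_integral_exp_mul_primitive (hα : 0 < α)
    (hf : IntegrableOn (fun s => Real.exp (-α * s) * f s) (Set.Ioi 0)) :
    Tendsto (fun T => Real.exp (-α * T) * ∫ s in (0 : ℝ)..T,
        Real.exp (α * s) * ∫ u in (0 : ℝ)..s, Real.exp (-α * u) * f u)
      atTop (nhds ((∫ s in Set.Ioi 0, Real.exp (-α * s) * f s) / α)) := by
  have hlim := ((intervalIntegral_tendsto_integral_Ioi 0 hf tendsto_id).sub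
    (tendsto_exp_neg_smul_intervalIntegral_zero hα hf)).div_const α
  rw [sub_zero] at hlim
  refine hlim.congr' ?_
  filter_upwards [eventually_ge_atTop 0] with T hT
  exact (exp_neg_mul_integral_exp_mul_primitive hα.ne'
    (intervalIntegrable_of_integrableOn_exp_neg_smul hf hT)).symm

lemma tendsto_exp_neg_mul_integral_langevin (hα : 0 < α)
    (hf : IntegrableOn (fun s => Real.exp (-α * s) * f s) (Set.Ioi 0))
    (hg : IntegrableOn (fun s => Real.exp (-α * s) * g s) (Set.Ioi 0)) :
    Tendsto (fun T => Real.exp (-α * T) * ∫ s in (0 : ℝ)..T,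
        (Real.exp (α * s) * (∫ u in (0 : ℝ)..s, Real.exp (-α * u) * f u) +
          α * Real.exp (α * s) * (∫ u in (0 : ℝ)..s, Real.exp (-α * u) * g u) + g s))
      atTop (nhds ((∫ s in Set.Ioi 0, Real.exp (-α * s) * f s) / α +
        ∫ s in Set.Ioi 0, Real.exp (-α * s) * g s)) := by
  refine ((tendsto_exp_neg_mul_integral_exp_mul_primitive hα hf).add
    (intervalIntegral_tendsto_integral_Ioi 0 hg tendsto_id)).congr' ?_
  filter_upwards [eventually_ge_atTop 0] with T hT
  have hfT := intervalIntegrable_of_integrableOn_exp_neg_smul hf hT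
  have hgT := intervalIntegrable_of_integrableOn_exp_neg_smul hg hT
  have hF := intervalIntegrable_exp_mul_primitive (α := α) hfT
  have hG := intervalIntegrable_exp_mul_primitive (α := α) hgT
  simp only [mul_assoc α]
  rw [intervalIntegral.integral_add (hF.add (hG.const_mul α)) hgT,
    intervalIntegral.integral_add hF (hG.const_mul α), intervalIntegral.integral_const_mul,
    mul_integral_exp_mul_primitive hgT, id]
  linear_combination -(∫ u in (0 : ℝ)..T, Real.exp (-α * u) * g u) * exp_neg_mul_mul_exp_mul α T

end LangevinPath

section ProcessIntegrability

variable {Ω : Type*} [MeasurableSpace Ω] {P : Measure Ω}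

lemma aestronglyMeasurable_prod_of_ae_continuousOn_Ici {E : Type*} [TopologicalSpace E]
    [TopologicalSpace.PseudoMetrizableSpace E] {Y : ℝ → Ω → E} {a : ℝ} {ν : Measure ℝ}
    (hmeas : ∀ t, a ≤ t → StronglyMeasurable (Y t))
    (hcont : ∀ᵐ ω ∂P, ContinuousOn (fun t => Y t ω) (Set.Ici a)) (hν : ∀ᵐ t ∂ν, a ≤ t) :
    AEStronglyMeasurable (fun x : Ω × ℝ => Y x.2 x.1) (P.prod ν) := by
  classical
  obtain ⟨N, hsub, hNmeas, hN⟩ := exists_measurable_superset_of_null (ae_iff.1 hcont)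
  -- Freezing the bad paths and the times before `a` gives an everywhere continuous modification.
  let C : ℝ → Ω → E := fun t ω => if ω ∈ N then Y a ω else Y (max a t) ω
  have hCmeas (t : ℝ) : StronglyMeasurable (C t) :=
    (hmeas a le_rfl).ite hNmeas (hmeas _ (le_max_left a t))
  have hCcont (ω : Ω) : Continuous fun t => C t ω := by
    by_cases hω : ω ∈ N
    · simpa only [C, hω, if_true] using continuous_const
    · have hY : ContinuousOn (fun t => Y t ω) (Set.Ici a) := not_not.1 fun h => hω (hsub h)
      simp only [C, hω, if_false]
      exact hY.comp_continuous (by fun_prop) fun t => le_max_left a t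
  refine ⟨fun x => C x.2 x.1, (stronglyMeasurable_uncurry_of_continuous_of_stronglyMeasurable
    hCcont hCmeas).comp_measurable measurable_swap, ?_⟩
  filter_upwards [Measure.quasiMeasurePreserving_fst.ae (measure_eq_zero_iff_ae_notMem.1 hN),
    Measure.quasiMeasurePreserving_snd.ae hν] with x hx hax
  simp only [C, hx, if_false, max_eq_right hax]

lemma integral_abs_le_one_add_integral_sq [IsProbabilityMeasure P] {Y : Ω → ℝ}
    (hY : MemLp Y 2 P) : ∫ ω, |Y ω| ∂P ≤ 1 + ∫ ω, Y ω ^ 2 ∂P := by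
  calc ∫ ω, |Y ω| ∂P ≤ ∫ ω, (1 + Y ω ^ 2) ∂P := by
        refine integral_mono (hY.integrable one_le_two).abs
          ((integrable_const 1).add hY.integrable_sq) fun ω => ?_
        change |Y ω| ≤ 1 + Y ω ^ 2
        nlinarith [sq_abs (Y ω), sq_nonneg (|Y ω| - 1)]
    _ = 1 + ∫ ω, Y ω ^ 2 ∂P := by
        rw [integral_add (integrable_const 1) hY.integrable_sq]
        simp

lemma integrable_prod_mul_of_integral_sq_le [IsProbabilityMeasure P] {ν : Measure ℝ} [SFinite ν]
    {Y : ℝ → Ω → ℝ} {w v : ℝ → ℝ}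
    (hmeas : AEStronglyMeasurable (fun x : Ω × ℝ => Y x.2 x.1) (P.prod ν))
    (hY : ∀ᵐ t ∂ν, MemLp (Y t) 2 P) (hv : ∀ᵐ t ∂ν, ∫ ω, Y t ω ^ 2 ∂P ≤ v t)
    (hw : Integrable w ν) (hwv : Integrable (fun t => w t * v t) ν) :
    Integrable (fun x : Ω × ℝ => w x.2 * Y x.2 x.1) (P.prod ν) := by
  have hprod : AEStronglyMeasurable (fun x : Ω × ℝ => w x.2 * Y x.2 x.1) (P.prod ν) :=
    hw.aestronglyMeasurable.comp_snd.mul hmeas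
  refine (integrable_prod_iff' hprod).2 ⟨?_, ?_⟩
  · filter_upwards [hY] with t ht
    exact (ht.integrable one_le_two).const_mul (w t)
  · refine (hw.norm.add hwv.norm).mono' hprod.norm.prod_swap.integral_prod_right' ?_
    filter_upwards [hY, hv] with t ht hvt
    rw [Real.norm_of_nonneg (integral_nonneg fun _ => norm_nonneg _)]
    calc ∫ ω, ‖w t * Y t ω‖ ∂P = ‖w t‖ * ∫ ω, |Y t ω| ∂P := by
          simp only [norm_mul, integral_const_mul, Real.norm_eq_abs]
      _ ≤ ‖w t‖ * (1 + v t) := by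
          gcongr
          exact (integral_abs_le_one_add_integral_sq ht).trans (by gcongr)
      _ ≤ ‖w t‖ + ‖w t * v t‖ := by
          rw [mul_add, mul_one, norm_mul]
          gcongr
          exact le_abs_self _

lemma memLp_two_of_map_eq_gaussianReal {Y : Ω → ℝ} {m : ℝ} {v : NNReal}
    (hlaw : P.map Y = gaussianReal m v) : MemLp Y 2 P :=
  have hgauss : HasGaussianLaw Y P := ⟨by rw [hlaw]; infer_instance⟩
  hgauss.memLp_two

lemma integrableOn_exp_neg_mul_rpow {α p : ℝ} (hα : 0 < α) (hp : -1 < p) :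
    IntegrableOn (fun t => Real.exp (-α * t) * t ^ p) (Set.Ioi 0) := by
  simpa [mul_comm] using integrableOn_rpow_mul_exp_neg_mul_rpow hp one_pos hα

lemma integrable_prod_exp_neg_mul_of_integral_sq_le_rpow [IsProbabilityMeasure P] {α p : ℝ}
    {Y : ℝ → Ω → ℝ} (hα : 0 < α) (hp : -1 < p) (hmeas : ∀ t, 0 ≤ t → Measurable (Y t))
    (hcont : ∀ᵐ ω ∂P, ContinuousOn (fun t => Y t ω) (Set.Ici 0))
    (hY : ∀ t, 0 < t → MemLp (Y t) 2 P) (hsq : ∀ t, 0 < t → ∫ ω, Y t ω ^ 2 ∂P ≤ t ^ p) :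
    Integrable (fun x : Ω × ℝ => Real.exp (-α * x.2) * Y x.2 x.1)
      (P.prod (volume.restrict (Set.Ioi 0))) := by
  have hpos : ∀ᵐ t ∂volume.restrict (Set.Ioi (0 : ℝ)), 0 < t := ae_restrict_mem measurableSet_Ioi
  have hjoint := aestronglyMeasurable_prod_of_ae_continuousOn_Ici
    (fun t ht => (hmeas t ht).stronglyMeasurable) hcont (hpos.mono fun _ => le_of_lt)
  exact integrable_prod_mul_of_integral_sq_le hjoint (hpos.mono hY) (hpos.mono hsq)
    (exp_neg_integrableOn_Ioi 0 hα) (integrableOn_exp_neg_mul_rpow hα hp)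

lemma integral_sq_eq_rpow_of_fractional_covariance {B : ℝ → Ω → ℝ} {H t : ℝ} (hH : H ≠ 0)
    (hcov : ∀ s t : ℝ, 0 ≤ s → 0 ≤ t →
      ∫ ω, B s ω * B t ω ∂P = 1 / 2 * (s ^ (2 * H) + t ^ (2 * H) - |t - s| ^ (2 * H)))
    (ht : 0 ≤ t) : ∫ ω, B t ω ^ 2 ∂P = t ^ (2 * H) := by
  simp only [sq, hcov t t ht ht, sub_self, abs_zero, Real.zero_rpow (mul_ne_zero two_ne_zero hH)]
  ring

end ProcessIntegrability

theorem stmt_15_general {Ω : Type*} [MeasurableSpace Ω] (P : Measure Ω) [SFinite P]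
    (B : ℝ → Ω → ℝ) (α : ℝ) (hα : 0 < α)
    (hB : Integrable (fun x : Ω × ℝ => Real.exp (-α * x.2) * B x.2 x.1)
      (P.prod (volume.restrict (Set.Ioi 0))))
    (Z : ℝ → Ω → ℝ)
    (hZ : ∀ (t : ℝ) (ω : Ω), Z t ω = ∫ s in (0 : ℝ)..t, Real.exp (-α * s) * B s ω)
    (Zinf : Ω → ℝ)
    (hZinf : ∀ ω : Ω, Zinf ω = ∫ s in Set.Ioi (0 : ℝ), Real.exp (-α * s) * B s ω)
    (τ : ℝ) (hτ : 0 < τ) (L : ℝ → ℝ)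
    (hL : IntervalIntegrable L volume 0 τ) (hLper : Function.Periodic L τ)
    (A : ℝ → ℝ) (hA : ∀ t : ℝ, A t = ∫ s in (0 : ℝ)..t, Real.exp (-α * s) * L s)
    (Ainf : ℝ) (hAinf : Ainf = A τ / (1 - Real.exp (-α * τ)))
    (X : ℝ → Ω → ℝ)
    (hX : ∀ (t : ℝ) (ω : Ω), X t ω = Real.exp (α * t) * A t
        + α * Real.exp (α * t) * Z t ω + B t ω) :
    ∀ᵐ ω ∂P, Tendsto (fun T : ℝ => Real.exp (-α * T) * ∫ s in (0 : ℝ)..T, X s ω)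
      atTop (nhds (Ainf / α + Zinf ω)) := by
  have hLweighted := integrableOn_exp_neg_smul_of_periodic hα hτ hLper hL
  have hAinf_eq : Ainf = ∫ s in Set.Ioi 0, Real.exp (-α * s) * L s := by
    rw [hAinf, hA, div_eq_inv_mul]
    exact (integral_Ioi_exp_neg_smul_of_periodic hα hτ hLper hL).symm
  filter_upwards [hB.prod_right_ae] with ω hBω
  simpa only [hX, hZ, hA, hAinf_eq, hZinf] using
    tendsto_exp_neg_mul_integral_langevin hα hLweighted hBω

/-- Almost surely, as the integer `n → ∞`,
`e^{-α n} ∫_0^n X_s ds → A_∞ / α + Z_∞`. -/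
theorem stmt_15 {Ω : Type*} [MeasurableSpace Ω] (P : Measure Ω) [IsProbabilityMeasure P]
    (H : ℝ) (hH1 : 1 / 2 ≤ H) (hH2 : H < 1)
    (B : ℝ → Ω → ℝ)
    (hBmeas : ∀ t : ℝ, Measurable (B t))
    (hBgauss : ∀ (m : ℕ) (t : Fin m → ℝ) (c : Fin m → ℝ), (∀ i, 0 ≤ t i) →
      ∃ v : NNReal, Measure.map (fun ω => ∑ i, c i * B (t i) ω) P = gaussianReal 0 v)
    (hB0 : ∀ ω, B 0 ω = 0)
    (hBcov : ∀ s t : ℝ, 0 ≤ s → 0 ≤ t →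
      ∫ ω, B s ω * B t ω ∂P = 1 / 2 * (s ^ (2 * H) + t ^ (2 * H) - |t - s| ^ (2 * H)))
    (hBcont : ∀ᵐ ω ∂P, ContinuousOn (fun t => B t ω) (Set.Ici (0 : ℝ)))
    (α : ℝ) (hα : 0 < α)
    (Z : ℝ → Ω → ℝ)
    (hZ : ∀ (t : ℝ) (ω : Ω), Z t ω = ∫ s in (0:ℝ)..t, Real.exp (-α * s) * B s ω)
    (Zinf : Ω → ℝ)
    (hZinf : ∀ ω : Ω, Zinf ω = ∫ s in Set.Ioi (0:ℝ), Real.exp (-α * s) * B s ω)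
    (L : ℝ → ℝ)
    (hLmeas : Measurable L) (hLbdd : ∃ M : ℝ, ∀ t : ℝ, |L t| ≤ M)
    (hLper : ∀ t : ℝ, L (t + 1) = L t)
    (A : ℝ → ℝ) (hA : ∀ t : ℝ, A t = ∫ s in (0:ℝ)..t, Real.exp (-α * s) * L s)
    (Ainf : ℝ) (hAinf : Ainf = A 1 / (1 - Real.exp (-α)))
    (X : ℝ → Ω → ℝ)
    (hX : ∀ (t : ℝ) (ω : Ω), X t ω = Real.exp (α * t) * A t
        + α * Real.exp (α * t) * Z t ω + B t ω) :
    ∀ᵐ ω ∂P, Tendsto (fun n : ℕ => Real.exp (-α * n) * ∫ s in (0:ℝ)..(n:ℝ), X s ω)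
      atTop (nhds (Ainf / α + Zinf ω)) := by
  obtain ⟨M, hM⟩ := hLbdd
  have hL : IntervalIntegrable L volume 0 1 :=
    intervalIntegrable_const (c := M) |>.mono_fun' hLmeas.aestronglyMeasurable (.of_forall hM)
  have hBL2 (t : ℝ) (ht : 0 < t) : MemLp (B t) 2 P := by
    obtain ⟨v, hlaw⟩ := hBgauss 1 (fun _ => t) (fun _ => 1) fun _ => ht.le
    exact memLp_two_of_map_eq_gaussianReal (by simpa using hlaw)
  have hBsq (t : ℝ) (ht : 0 < t) : ∫ ω, B t ω ^ 2 ∂P = t ^ (2 * H) :=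
    integral_sq_eq_rpow_of_fractional_covariance (by linarith) hBcov ht.le
  have hB := integrable_prod_exp_neg_mul_of_integral_sq_le_rpow hα (by linarith)
    (fun t _ => hBmeas t) hBcont hBL2 fun t ht => (hBsq t ht).le
  filter_upwards [stmt_15_general P B α hα hB Z hZ Zinf hZinf 1 one_pos L hL hLper A hA Ainf
    (by simpa using hAinf) X hX] with ω hω
  exact hω.comp tendsto_natCast_atTop_atTop
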